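/- arXiv:2211.03146 — 2 statements merged into one kernel-verified Lean document; each statement's English description precedes it below -/
import Mathlib

section
/- Let T=(V,E) be a finite tree, let S=(s_1,…,s_p) be a nonempty proper vertex list, and let C be the vertex set of a connected component of T \ S, with S_C = N(C) ∩ S the set of sites adjacent to C. Then (i) every vertex of C belongs to 𝕋(s,S) for some s ∈ S_C, and (ii) for every node v ∈ C, 𝕋(v,S+v) ⊆ C. -/
/-!
The argument works in any connected graph: follow a geodesic one step at a time. From a
vertex `u` of `C` towards a nearest site `s`, every vertex before `s` is strictly closer to `u` than
any site, so the geodesic stays in `C` until its last step, which makes `s` adjacent to `C`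
(`exists_adj_component_of_nearest`); among the nearest sites, the one of least index owns `u`.
Conversely, if `x` is strictly closer to `v ∈ C` than to every site, then a geodesic from `x` to `v`
meets no site, so `x ∈ C` (`mem_component_of_closer`).
-/

/-- The distance from a vertex `v` to a list `S` of vertices:
`d(v,S) = min_{s ∈ S} d(v,s)`. -/
noncomputable def dList {V : Type*} (G : SimpleGraph V) (v : V) (S : List V) : ℕ :=
  sInf ((G.dist v) '' {s | s ∈ S})

/-- The territory `𝕋(s_i, S)` of the `i`-th site of the list `S` in the prioritized
Voronoi diagram: vertices `v` with `d(v,s_i) = d(v,S)` and `d(v,s_j) > d(v,S)` for `j < i`. -/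
def territory {V : Type*} (G : SimpleGraph V) (S : List V) (i : Fin S.length) : Set V :=
  {v | G.dist v (S.get i) = dList G v S ∧
       ∀ j : Fin S.length, j < i → dList G v S < G.dist v (S.get j)}

/-- The first step of a geodesic from `u` to `s`, for `u ≠ s`. -/
lemma exists_adj_dist_eq {V : Type*} {G : SimpleGraph V} (hG : G.Connected) {u s : V} {n : ℕ}
    (h : G.dist u s = n + 1) : ∃ x, G.Adj u x ∧ G.dist x s = n := by
  obtain ⟨p, hp⟩ := hG.exists_walk_length_eq_dist u s
  cases p with
  | nil => simp at h
  | @cons _ x _ hux q =>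
    refine ⟨x, hux, ?_⟩
    have h1 := SimpleGraph.dist_le q
    have h2 := hG.dist_triangle (u := u) (v := x) (w := s)
    have h3 := SimpleGraph.dist_eq_one_iff_adj.mpr hux
    simp only [SimpleGraph.Walk.length_cons] at hp
    omega

/-- A component `C` of `G \ S` enters only through avoiding `S` (`hCS`) and being closed under
adjacency outside `S` (`hcl`). The first step towards a nearest site either reaches that site or stays
in `C`, where the site is still nearest. -/
lemma exists_adj_component_of_nearest {V : Type*} {G : SimpleGraph V} (hG : G.Connected)
    {S : List V} {C : Set V} (hCS : ∀ a ∈ C, a ∉ S)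
    (hcl : ∀ a ∈ C, ∀ b, G.Adj a b → b ∉ S → b ∈ C) {s : V} (hs : s ∈ S) (n : ℕ) :
    ∀ u ∈ C, G.dist u s = n → (∀ t ∈ S, G.dist u s ≤ G.dist u t) → ∃ w ∈ C, G.Adj s w := by
  induction n with
  | zero =>
    intro u hu h0 _
    rw [hG.dist_eq_zero_iff] at h0
    exact absurd hs (h0 ▸ hCS u hu)
  | succ n ih =>
    intro u hu hn hmin
    obtain ⟨x, hux, hx⟩ := exists_adj_dist_eq hG hn
    have h1 := SimpleGraph.dist_eq_one_iff_adj.mpr hux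
    by_cases hn0 : n = 0
    · subst hn0
      rw [hG.dist_eq_zero_iff] at hx
      subst hx
      exact ⟨u, hu, hux.symm⟩
    · have hxS : x ∉ S := fun hxS => by
        have := hmin x hxS
        omega
      refine ih x (hcl u hu x hux hxS) hx fun t ht => ?_
      have h2 := hmin t ht
      have h3 := hG.dist_triangle (u := u) (v := x) (w := t)
      omega

/-- The first vertex `y` after `x` on a geodesic to `v` is again strictly closer to `v` than to every
site, so membership in `C` propagates from `v` back to `x`, which is itself not a site. -/
lemma mem_component_of_closer {V : Type*} {G : SimpleGraph V} (hG : G.Connected)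
    {S : List V} {C : Set V}
    (hcl : ∀ a ∈ C, ∀ b, G.Adj a b → b ∉ S → b ∈ C) {v : V} (hv : v ∈ C) (n : ℕ) :
    ∀ x, G.dist x v = n → (∀ t ∈ S, G.dist x v < G.dist x t) → x ∈ C := by
  induction n with
  | zero =>
    intro x h0 _
    rw [hG.dist_eq_zero_iff] at h0
    exact h0 ▸ hv
  | succ n ih =>
    intro x hn hmin
    obtain ⟨y, hxy, hy⟩ := exists_adj_dist_eq hG hn
    have h1 := SimpleGraph.dist_eq_one_iff_adj.mpr hxy
    refine hcl y (ih y hy fun t ht => ?_) x hxy.symm fun hxS => ?_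
    · have h2 := hmin t ht
      have h3 := hG.dist_triangle (u := x) (v := y) (w := t)
      omega
    · simpa using hmin x hxS

/-- The `sInf` defining `dList` ranges over a nonempty set, so it is a genuine minimum, and the
least index attaining it is the owner of `u`. -/
lemma exists_mem_territory {V : Type*} (G : SimpleGraph V) {S : List V} (hne : S ≠ []) (u : V) :
    ∃ i : Fin S.length, u ∈ territory G S i := by
  have hex : ∃ i : Fin S.length, G.dist u (S.get i) = dList G u S := by
    obtain ⟨s, hs, h⟩ := Nat.sInf_mem (s := (G.dist u) '' {s | s ∈ S})
      ⟨_, S.head hne, List.head_mem hne, rfl⟩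
    obtain ⟨i, rfl⟩ := List.get_of_mem hs
    exact ⟨i, h⟩
  obtain ⟨i, hi, hmin⟩ := WellFounded.has_min (wellFounded_lt (α := Fin S.length))
    {i | G.dist u (S.get i) = dList G u S} hex
  refine ⟨i, hi, fun j hj => lt_of_le_of_ne (Nat.sInf_le ⟨_, List.get_mem S j, rfl⟩) ?_⟩
  exact fun h => hmin j h.symm hj

/-- let `C` be (the vertex set of) a connected component of `T \ S`,
where `T` is a tree and `S` a nonempty proper vertex list. Then (i) every vertex
of `C` belongs to the territory of a site of `S` adjacent to `C`, and (ii) for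
every `v ∈ C`, the territory of the appended site `v` is contained in `C`. -/
theorem tree_component_territory {V : Type*} [Fintype V] (T : SimpleGraph V)
    (hT : T.IsTree) (S : List V) (hS : S.Nodup) (hne : S ≠ []) (C : Set V)
    (hC : ∃ cc : (T.induce {w : V | w ∉ S}).ConnectedComponent,
      C = Subtype.val '' cc.supp) :
    (∀ u ∈ C, ∃ i : Fin S.length,
      (∃ w ∈ C, T.Adj (S.get i) w) ∧ u ∈ territory T S i) ∧
    (∀ v ∈ C, territory T (S ++ [v]) ⟨S.length, by simp⟩ ⊆ C) := by
  have hG : T.Connected := hT.1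
  obtain ⟨cc, rfl⟩ := hC
  have hCS : ∀ a ∈ Subtype.val '' cc.supp, a ∉ S := by
    rintro _ ⟨a, _, rfl⟩
    exact a.2
  have hcl : ∀ a ∈ Subtype.val '' cc.supp, ∀ b, T.Adj a b → b ∉ S →
      b ∈ Subtype.val '' cc.supp := by
    rintro _ ⟨a, ha, rfl⟩ b hab hb
    have hadj : (T.induce {w : V | w ∉ S}).Adj a ⟨b, hb⟩ := hab
    exact ⟨⟨b, hb⟩, (cc.mem_supp_congr_adj hadj).mp ha, rfl⟩
  constructor
  · intro u hu
    obtain ⟨i, hi⟩ := exists_mem_territory T hne u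
    refine ⟨i, exists_adj_component_of_nearest hG hCS hcl (List.get_mem S i) _ u hu rfl
      fun t ht => ?_, hi⟩
    rw [hi.1]
    exact Nat.sInf_le ⟨t, ht, rfl⟩
  · rintro v hv x ⟨hx, hlt⟩
    refine mem_component_of_closer hG hcl hv _ x rfl fun t ht => ?_
    obtain ⟨j, rfl⟩ := List.get_of_mem ht
    -- `v` comes last in `S ++ [v]`, so it loses every tie against a site of `S`.
    have h := hlt ⟨j, by simp⟩ j.2
    rw [← hx] at h
    simpa using h
end

section
/- Consider a hitting-set instance (A,B,U) with |A| = |B| = n in which every set of B intersects at most n/2 of the sets of B, every set of A has cardinality t = (|U|+1)/2, t > 2, and t < n/2 + 2. Let G be the graph associated with this instance, let π ≡ 1 be the unit cost function, and let S=(s). Then there exists a vertex v ≠ s with L_π(S+v) ≤ n + t + 1 if and only if some set of A intersects every set of B. -/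
/-- `W(u,v)`: the set of vertices strictly closer to `u` than to `v`. -/
def Wset {V : Type*} (G : SimpleGraph V) (u v : V) : Set V :=
  {w | G.dist u w < G.dist v w}

/-- The load `ℓ_π(s_i,S)` of the `i`-th site: the total cost of its territory. -/
noncomputable def load {V : Type*} (G : SimpleGraph V) (π : V → ℝ) (S : List V)
    (i : Fin S.length) : ℝ :=
  ∑ᶠ x ∈ territory G S i, π x

/-- The load `L_π(S)` of the prioritized Voronoi diagram: the maximum load of a site. -/
noncomputable def Lload {V : Type*} (G : SimpleGraph V) (π : V → ℝ) (S : List V) : ℝ :=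
  ⨆ i : Fin S.length, load G π S i

/-- Vertices of the graph associated with a hitting-set instance `(A,B,U)` with
`|A| = |B| = n` and universe `α`: one vertex `va i` (resp. `vb i`) per entry of the
list `A` (resp. `B`), one vertex `vu e` per element `e` of the universe, and three
special vertices `vs`, `vx`, `vy`. -/
inductive HSV (α : Type*) (n : ℕ) where
  | va : Fin n → HSV α n
  | vb : Fin n → HSV α n
  | vu : α → HSV α n
  | vs : HSV α n
  | vx : HSV α n
  | vy : HSV α n

/-- Base (asymmetric) adjacency relation of the associated graph: `U ∪ {x,y}` is a
clique, `s` is adjacent exactly to `x` and `y`, each `a ∈ A` is adjacent to `y` and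
to the elements of `a`, and each `b ∈ B` is adjacent to the elements of `b`. -/
def hsBase {α : Type*} {n : ℕ} (SA SB : Fin n → Finset α) :
    HSV α n → HSV α n → Prop
  | .vu _, .vu _ => True
  | .vu _, .vx => True
  | .vu _, .vy => True
  | .vx, .vy => True
  | .vs, .vx => True
  | .vs, .vy => True
  | .va _, .vy => True
  | .va i, .vu e => e ∈ SA i
  | .vb i, .vu e => e ∈ SB i
  | _, _ => False

/-- The graph associated with a hitting-set instance. -/
def hsGraph {α : Type*} {n : ℕ} (SA SB : Fin n → Finset α) :
    SimpleGraph (HSV α n) :=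
  SimpleGraph.fromRel (hsBase SA SB)

/-! ### Small distances in connected graphs -/

/-- Distance at most two in a connected graph, in terms of adjacency. -/
theorem dist_le_two_iff {V : Type*} {G : SimpleGraph V} (hG : G.Connected) (u v : V) :
    G.dist u v ≤ 2 ↔ u = v ∨ G.Adj u v ∨ ∃ w, G.Adj u w ∧ G.Adj w v := by
  constructor
  · intro h
    obtain ⟨p, hp⟩ := hG.exists_walk_length_eq_dist u v
    rw [← hp] at h
    match p, h with
    | .nil, _ => exact Or.inl rfl
    | .cons h1 .nil, _ => exact Or.inr (Or.inl h1)
    | .cons h1 (.cons h2 .nil), _ => exact Or.inr (Or.inr ⟨_, h1, h2⟩)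
    | .cons h1 (.cons h2 (.cons h3 p)), h =>
      simp only [SimpleGraph.Walk.length_cons] at h
      omega
  · rintro (rfl | h | ⟨w, h1, h2⟩)
    · simp
    · rw [SimpleGraph.dist_eq_one_iff_adj.2 h]
      omega
    · exact SimpleGraph.dist_le (.cons h1 (.cons h2 .nil))

theorem dist_lt_two_iff {V : Type*} {G : SimpleGraph V} (hG : G.Connected) (u v : V) :
    G.dist u v < 2 ↔ u = v ∨ G.Adj u v := by
  rw [← SimpleGraph.dist_eq_one_iff_adj, ← hG.dist_eq_zero_iff]
  omega

/-! ### Counting vertices -/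

/-- The vertex type as a disjoint sum, used only to count vertices. -/
def hsEquiv (α : Type*) (n : ℕ) :
    HSV α n ≃ Option (Option (Option ((Fin n ⊕ Fin n) ⊕ α))) where
  toFun
    | .vs => none
    | .vx => some none
    | .vy => some (some none)
    | .va i => some (some (some (.inl (.inl i))))
    | .vb i => some (some (some (.inl (.inr i))))
    | .vu e => some (some (some (.inr e)))
  invFun
    | none => .vs
    | some none => .vx
    | some (some none) => .vy
    | some (some (some (.inl (.inl i)))) => .va i
    | some (some (some (.inl (.inr i)))) => .vb i
    | some (some (some (.inr e))) => .vu e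
  left_inv v := by cases v <;> rfl
  right_inv v := by rcases v with _ | _ | _ | (_ | _) | _ <;> rfl

instance hsFintype (α : Type*) [Fintype α] (n : ℕ) : Fintype (HSV α n) :=
  Fintype.ofEquiv _ (hsEquiv α n).symm

theorem hsCard (α : Type*) [Fintype α] (n : ℕ) :
    Nat.card (HSV α n) = 2 * n + Fintype.card α + 3 := by
  rw [Nat.card_congr (hsEquiv α n)]
  simp
  ring

theorem hs_sum {α : Type*} [Fintype α] {n : ℕ} (f : HSV α n → ℕ) :
    ∑ v, f v = ∑ i, f (.va i) + ∑ i, f (.vb i) + ∑ e, f (.vu e) + f .vs + f .vx + f .vy := by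
  rw [← (hsEquiv α n).symm.sum_comp]
  simp only [Fintype.sum_option, Fintype.sum_sum_type, hsEquiv, Equiv.coe_fn_symm_mk]
  ring

open Classical in
/-- Counting a set of vertices kind by kind. -/
theorem hs_ncard {α : Type*} [Fintype α] {n : ℕ} (W : Set (HSV α n)) :
    W.ncard = (Finset.univ.filter fun i => HSV.va i ∈ W).card
      + (Finset.univ.filter fun i => HSV.vb i ∈ W).card
      + (Finset.univ.filter fun e => HSV.vu e ∈ W).card
      + (if HSV.vs ∈ W then 1 else 0) + (if HSV.vx ∈ W then 1 else 0)
      + (if HSV.vy ∈ W then 1 else 0) := by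
  rw [Set.ncard_eq_toFinset_card']
  have h : W.toFinset = Finset.univ.filter (· ∈ W) := by ext; simp
  rw [h, Finset.card_filter, hs_sum]
  simp only [Finset.card_filter]

/-! ### Voronoi diagrams with two sites -/

theorem dList_pair {V : Type*} (G : SimpleGraph V) (w s v : V) :
    dList G w [s, v] = min (G.dist w s) (G.dist w v) := by
  have h : {z | z ∈ [s, v]} = ({s, v} : Set V) := by ext; simp
  rw [dList, h, Set.image_pair, csInf_pair]

/-- Ties go to the first site. -/
theorem territory_zero {V : Type*} (G : SimpleGraph V) (s v : V) :
    territory G [s, v] (0 : Fin 2) = {w | G.dist w v < G.dist w s}ᶜ := by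
  ext w
  simp [territory, dList_pair]

theorem territory_one {V : Type*} (G : SimpleGraph V) (s v : V) :
    territory G [s, v] (1 : Fin 2) = {w | G.dist w v < G.dist w s} := by
  ext w
  simp only [territory, dList_pair, Set.mem_ofPred_eq]
  constructor
  · rintro ⟨_, h⟩
    have := h (0 : Fin 2) Nat.zero_lt_one
    simpa using this
  · intro h
    refine ⟨by simpa using h.le, fun j hj => ?_⟩
    have : j = (0 : Fin 2) := by
      apply Fin.ext
      have : j.val < 1 := hj
      simpa using this
    subst this
    simpa using h

theorem load_one {V : Type*} [Finite V] (G : SimpleGraph V) (S : List V) (i : Fin S.length) :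
    load G (fun _ => 1) S i = ((territory G S i).ncard : ℝ) := by
  rw [load, finsum_mem_eq_finite_toFinset_sum _ (Set.toFinite _), Finset.sum_const,
    ← Set.ncard_eq_toFinset_card]
  simp

/-- The two loads add up to the number of vertices, so a bound by half of it forces equality. -/
theorem Lload_le_iff {V : Type*} [Finite V] (G : SimpleGraph V) (s v : V) (m : ℕ)
    (hm : Nat.card V = 2 * m) :
    Lload G (fun _ => 1) [s, v] ≤ (m : ℝ) ↔ ({w | G.dist w v < G.dist w s}).ncard ≤ m ∧
      m ≤ ({w | G.dist w v < G.dist w s}).ncard := by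
  have hc := Set.ncard_add_ncard_compl {w | G.dist w v < G.dist w s}
  have h0 := load_one G [s, v] (0 : Fin 2)
  have h1 := load_one G [s, v] (1 : Fin 2)
  rw [territory_zero] at h0
  rw [territory_one] at h1
  have : Lload G (fun _ => 1) [s, v] ≤ (m : ℝ) ↔
      ∀ i : Fin 2, load G (fun _ => 1) [s, v] i ≤ (m : ℝ) :=
    ciSup_le_iff (Set.finite_range _).bddAbove
  rw [this, Fin.forall_fin_two, h0, h1, Nat.cast_le, Nat.cast_le]
  omega

/-! ### Distances in the associated graph -/

section Distances

variable {α : Type*} {n : ℕ} {SA SB : Fin n → Finset α}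

theorem hs_nonempty (hG : (hsGraph SA SB).Connected) (j : Fin n) : (SB j).Nonempty := by
  have : Nontrivial (HSV α n) := ⟨.vs, .vx, by simp⟩
  obtain ⟨w, hw⟩ := hG.preconnected.exists_adj_of_nontrivial (.vb j)
  cases w <;> simp [hsGraph, hsBase] at hw
  exact ⟨_, hw⟩

theorem exists_hsv {p : HSV α n → Prop} : (∃ w, p w) ↔
    (∃ i, p (.va i)) ∨ (∃ i, p (.vb i)) ∨ (∃ e, p (.vu e)) ∨ p .vs ∨ p .vx ∨ p .vy := by
  constructor
  · rintro ⟨w, hw⟩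
    cases w <;> grind
  · rintro (⟨_, h⟩ | ⟨_, h⟩ | ⟨_, h⟩ | h | h | h) <;> exact ⟨_, h⟩

/-- The vertices strictly closer to `v` than to `s`, by kind. -/
theorem closer_iff (hG : (hsGraph SA SB).Connected) (v : HSV α n) (hv : v ≠ .vs) :
    let G := hsGraph SA SB
    let W := {w | G.dist w v < G.dist w .vs}
    .vs ∉ W ∧ (.vx ∈ W ↔ v = .vx) ∧ (.vy ∈ W ↔ v = .vy) ∧
    (∀ e, .vu e ∈ W ↔ .vu e = v ∨ G.Adj (.vu e) v) ∧
    (∀ i, .va i ∈ W ↔ .va i = v ∨ G.Adj (.va i) v) ∧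
    (∀ j, .vb j ∈ W ↔ .vb j = v ∨ G.Adj (.vb j) v ∨ ∃ e ∈ SB j, G.Adj (.vu e) v) := by
  intro G W
  have hx : G.dist .vx .vs = 1 := SimpleGraph.dist_eq_one_iff_adj.2 (by simp [G, hsGraph, hsBase])
  have hy : G.dist .vy .vs = 1 := SimpleGraph.dist_eq_one_iff_adj.2 (by simp [G, hsGraph, hsBase])
  -- a vertex with a neighbour in common with `s`, but neither equal nor adjacent to it
  have two : ∀ w, ¬ (w = .vs ∨ G.Adj w .vs) → (∃ z, G.Adj w z ∧ G.Adj z .vs) →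
      G.dist w .vs = 2 := by
    intro w h1 h2
    have a := (dist_le_two_iff hG w .vs).2 (Or.inr (Or.inr h2))
    have b := (dist_lt_two_iff hG w .vs).not.2 h1
    change G.dist w .vs ≤ 2 at a
    change ¬ G.dist w .vs < 2 at b
    omega
  have hu : ∀ e, G.dist (.vu e) .vs = 2 := fun e =>
    two _ (by simp [G, hsGraph, hsBase]) ⟨.vx, by simp [G, hsGraph, hsBase]⟩
  have ha : ∀ i, G.dist (.va i) .vs = 2 := fun i =>
    two _ (by simp [G, hsGraph, hsBase]) ⟨.vy, by simp [G, hsGraph, hsBase]⟩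
  have hb : ∀ j, G.dist (.vb j) .vs = 3 := by
    intro j
    obtain ⟨e, he⟩ := hs_nonempty hG j
    have h1 : G.Adj (.vb j) (.vu e) := by simpa [G, hsGraph, hsBase] using he
    have h2 := hG.dist_triangle (u := .vb j) (v := .vu e) (w := .vs)
    change G.dist (.vb j) .vs ≤ G.dist (.vb j) (.vu e) + G.dist (.vu e) .vs at h2
    rw [hu, SimpleGraph.dist_eq_one_iff_adj.2 h1] at h2
    have h3 : ¬ G.dist (.vb j) .vs ≤ 2 := by
      rw [dist_le_two_iff hG, exists_hsv]
      simp [hsGraph, hsBase]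
    omega
  have key : ∀ w, w ∈ W ↔ G.dist w v < G.dist w .vs := fun _ => Iff.rfl
  refine ⟨by simp [key], ?_, ?_, ?_, ?_, ?_⟩
  · rw [key, hx, Nat.lt_one_iff, hG.dist_eq_zero_iff, eq_comm]
  · rw [key, hy, Nat.lt_one_iff, hG.dist_eq_zero_iff, eq_comm]
  · intro e
    rw [key, hu, dist_lt_two_iff hG]
  · intro i
    rw [key, ha, dist_lt_two_iff hG]
  · intro j
    rw [key, hb, Nat.lt_succ_iff, dist_le_two_iff hG, exists_hsv]
    simp [G, hsGraph, hsBase]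

end Distances

/-! ### The equivalence -/

/-- let `(A,B,U)` be a hitting-set instance with `|A| = |B| = n`,
in which every set of `B` intersects at most `n/2` sets of `B`, every set of `A`
has cardinality `t = (|U|+1)/2`, `t > 2` and `t < n/2 + 2`. With unit costs and
`S = (s)` in the associated graph, there exists a vertex `v ≠ s` with
`L_π(S+v) ≤ n + t + 1` if and only if some set of `A` intersects every set of `B`. -/
theorem hs_hardness {α : Type*} [Fintype α] [DecidableEq α] (n t : ℕ)
    (SA SB : Fin n → Finset α)
    (hhalf : ∀ i : Fin n,
      2 * (Finset.univ.filter (fun j : Fin n => (SB i ∩ SB j).Nonempty)).card ≤ n)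
    (hcardA : ∀ i : Fin n, (SA i).card = t)
    (ht : 2 * t = Fintype.card α + 1)
    (ht2 : 2 < t) (htn : 2 * t < n + 4)
    (hconn : (hsGraph SA SB).Connected) :
    (∃ v : HSV α n, v ≠ HSV.vs ∧
        Lload (hsGraph SA SB) (fun _ => 1) [HSV.vs, v] ≤ (n : ℝ) + t + 1) ↔
      (∃ i : Fin n, ∀ j : Fin n, (SA i ∩ SB j).Nonempty) := by
  classical
  have hV : Nat.card (HSV α n) = 2 * (n + t + 1) := by rw [hsCard]; omega
  have hcast : (n : ℝ) + t + 1 = ((n + t + 1 : ℕ) : ℝ) := by push_cast; rfl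
  have hB := hs_nonempty hconn
  -- the number of vertices closer to `a = SA i` than to `s`
  have hA : ∀ i : Fin n,
      ({w | (hsGraph SA SB).dist w (.va i) < (hsGraph SA SB).dist w .vs}).ncard =
        1 + (Finset.univ.filter fun j => (SA i ∩ SB j).Nonempty).card + t := by
    intro i
    obtain ⟨h1, h2, h3, h4, h5, h6⟩ := closer_iff hconn (.va i) (by simp)
    rw [hs_ncard]
    simp only [h1, h2, h3, h4, h5, h6]
    simp [hsGraph, hsBase, hcardA, Finset.filter_eq', Finset.Nonempty, and_comm]
  constructor
  · rintro ⟨v, hv, h⟩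
    rw [hcast, Lload_le_iff _ _ _ _ hV] at h
    obtain ⟨h1, h2, h3, h4, h5, h6⟩ := closer_iff hconn v hv
    -- if every element of `U` equals `v` or is adjacent to it, then all of `U` and `B` is closer
    -- to `v`, and `2t - 1 + n > n + t + 1` since `t > 2`
    have big : ¬ ∀ e, .vu e = v ∨ (hsGraph SA SB).Adj (.vu e) v := by
      intro hall
      have hu := fun e => (h4 e).2 (hall e)
      have hb := fun j => (h6 j).2 (by
        obtain ⟨e, he⟩ := hB j
        rcases hall e with rfl | h
        · exact Or.inr (Or.inl (by simpa [hsGraph, hsBase] using he))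
        · exact Or.inr (Or.inr ⟨e, he, h⟩))
      rw [hs_ncard] at h
      simp only [hu, hb, Finset.filter_true, Finset.card_univ, Fintype.card_fin] at h
      omega
    cases v with
    | vs => exact absurd rfl hv
    | va i =>
      rw [hA] at h
      refine ⟨i, fun j => ?_⟩
      have hc : (Finset.univ.filter fun j => (SA i ∩ SB j).Nonempty).card =
          (Finset.univ : Finset (Fin n)).card := by
        have := Finset.card_filter_le Finset.univ fun j => (SA i ∩ SB j).Nonempty
        simp only [Finset.card_univ, Fintype.card_fin] at this ⊢
        omega
      exact Finset.card_filter_eq_iff.1 hc j (Finset.mem_univ j)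
    | vb i =>
      exfalso
      rw [hs_ncard] at h
      simp only [h1, h2, h3, h4, h5, h6] at h
      have hb : ∀ j, (HSV.vb j : HSV α n) = .vb i ∨ (hsGraph SA SB).Adj (.vb j) (.vb i) ∨
          (∃ e ∈ SB j, (hsGraph SA SB).Adj (.vu e) (.vb i)) ↔ (SB i ∩ SB j).Nonempty := by
        intro j
        have := hB i
        simp only [hsGraph, hsBase, SimpleGraph.fromRel_adj, Finset.Nonempty, Finset.mem_inter,
          HSV.vb.injEq] at this ⊢
        constructor
        · rintro (rfl | h | h)
          · simpa using this
          · simp at h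
          · obtain ⟨e, he, h⟩ := h
            exact ⟨e, by simpa using h, he⟩
        · rintro ⟨e, he, he'⟩
          exact Or.inr (Or.inr ⟨e, he', by simpa using he⟩)
      simp only [hb] at h
      have hu := Finset.card_filter_le (Finset.univ : Finset α) fun e =>
        (HSV.vu e : HSV α n) = .vb i ∨ (hsGraph SA SB).Adj (.vu e) (.vb i)
      have ha : (Finset.univ.filter fun k => (HSV.va k : HSV α n) = .vb i ∨
          (hsGraph SA SB).Adj (.va k) (.vb i)).card = 0 := by
        simp [hsGraph, hsBase]
      have hh := hhalf i
      rw [Finset.card_univ] at hu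
      simp only [reduceCtorEq, if_false] at h hu ha
      omega
    | vu e => exact absurd (fun e' => by simp [hsGraph, hsBase, em]) big
    | vx => exact absurd (fun e' => by simp [hsGraph, hsBase]) big
    | vy => exact absurd (fun e' => by simp [hsGraph, hsBase]) big
  · rintro ⟨i, hi⟩
    refine ⟨.va i, by simp, ?_⟩
    rw [hcast, Lload_le_iff _ _ _ _ hV, hA, Finset.filter_true_of_mem fun j _ => hi j]
    simp only [Finset.card_univ, Fintype.card_fin]
    omega
end
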